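/- Let 𝒮 = {η ∈ 𝓜 : 𝒢(η) ≤ 0} for a function 𝒢 : 𝓜 → ℝᵐ, and let η* ∈ 𝒮 minimize 𝒫 over 𝒮. Let 𝒟 = {η ∈ 𝓜 : d𝒫(η*; η − η*) and d𝒢(η*; η − η*) exist}, and suppose 𝒞 ⊆ 𝒟 satisfies: η* ∈ 𝒞, 𝒞 is convex, and for all η₁, η₂ ∈ 𝒞 and 0 ≤ t ≤ 1, d𝒫(η*; (1−t)η₁ + tη₂ − η*) = (1−t)·d𝒫(η*; η₁ − η*) + t·d𝒫(η*; η₂ − η*), and similarly for d𝒢. Then there exist r* ≥ 0 and λ* ∈ ℝ₊ᵐ, not both zero, such that λ* · 𝒢(η*) = 0 and r*·d𝒫(η*; η − η*) + λ* · d𝒢(η*; η − η*) ≥ 0 for every η ∈ 𝒞. -/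

import Mathlib

open MeasureTheory Filter Topology Set

noncomputable section

abbrev Vec (n : ℕ) : Type := Fin n → ℝ
abbrev Pt (n : ℕ) : Type := Vec n × Vec n

/-- The set `𝒜 = {(x,y) : 0 ≤ yᵢ ≤ xᵢ for all i}` on which treaties are concentrated. -/
def treatySet (n : ℕ) : Set (Pt n) := {p | ∀ i, 0 ≤ p.2 i ∧ p.2 i ≤ p.1 i}

/-- A reinsurance treaty for `μ`: a probability measure on `ℝ₊ⁿ × ℝ₊ⁿ` with first
marginal `μ` giving full measure to `𝒜`. -/
def IsTreaty (n : ℕ) (μ : Measure (Vec n)) (η : Measure (Pt n)) : Prop :=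
  IsProbabilityMeasure η ∧ η.map Prod.fst = μ ∧ η (treatySet n) = 1

/-- The convex combination `(1-t)·η + t·ϑ` of two measures. -/
def combo {α : Type*} [MeasurableSpace α] (η ϑ : Measure α) (t : ℝ) : Measure α :=
  ENNReal.ofReal (1 - t) • η + ENNReal.ofReal t • ϑ

/-- `HasDirDeriv P η ϑ L` : the directional derivative of `P` at `η` in the
direction `ϑ - η` exists and equals `L`, i.e. `(P(η + t(ϑ - η)) - P(η))/t → L`
as `t → 0⁺`. -/
def HasDirDeriv {α : Type*} [MeasurableSpace α] (P : Measure α → ℝ)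
    (η ϑ : Measure α) (L : ℝ) : Prop :=
  Tendsto (fun t : ℝ => (P (combo η ϑ t) - P η) / t) (𝓝[>] 0) (𝓝 L)

/-!
If some `η ∈ 𝒞` had `d𝒫(η*; η − η*) < 0` and `𝒢(η*) + d𝒢(η*; η − η*) < 0`, then a short step from
`η*` towards `η` would stay feasible and lower `𝒫`. So this system of strict inequalities has no
solution in `𝒞`. Its left-hand sides are convex on `𝒞`, and for such a system Gordan's alternative,
which is Hahn–Banach separation of `0` from an open convex set, yields nonnegative weights, not all
zero, whose weighted sum is nonnegative on `𝒞`. These are the multipliers; evaluating at `η*`, where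
the derivatives vanish, gives complementary slackness.
-/

section Gordan

variable {X ι : Type*} {s : Set X} {f : X → ι → ℝ}

/-- Convexlike maps in the sense of Ky Fan: every convex combination of values of `f` on `s`
dominates some value of `f` on `s`. This replaces convexity when `X` has no linear structure. -/
def ConvexLikeOn (s : Set X) (f : X → ι → ℝ) : Prop :=
  ∀ x ∈ s, ∀ y ∈ s, ∀ a b : ℝ, 0 ≤ a → 0 ≤ b → a + b = 1 → ∃ z ∈ s, f z ≤ a • f x + b • f y

/-- The strict epigraph of the image of `f`: the vectors exceeding some value of `f` on `s` in
every coordinate. It is the set separated from `0` in Gordan's alternative. -/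
def strictUpperImage (s : Set X) (f : X → ι → ℝ) : Set (ι → ℝ) :=
  {y | ∃ x ∈ s, StrongLT (f x) y}

lemma isOpen_strictUpperImage [Finite ι] : IsOpen (strictUpperImage s f) := by
  have h : strictUpperImage s f = ⋃ x ∈ s, univ.pi fun i => Ioi (f x i) := by
    ext y
    simp [strictUpperImage, StrongLT]
  rw [h]
  exact isOpen_biUnion fun x _ => isOpen_set_pi finite_univ fun i _ => isOpen_Ioi

lemma ConvexLikeOn.convex_strictUpperImage (hf : ConvexLikeOn s f) :
    Convex ℝ (strictUpperImage s f) := by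
  rintro y₁ ⟨x₁, hx₁, hy₁⟩ y₂ ⟨x₂, hx₂, hy₂⟩ a b ha hb hab
  obtain ⟨z, hz, hfz⟩ := hf x₁ hx₁ x₂ hx₂ a b ha hb hab
  refine ⟨z, hz, fun i => (hfz i).trans_lt ?_⟩
  have hpos : 0 < a • (y₁ i - f x₁ i) + b • (y₂ i - f x₂ i) :=
    convex_Ioi (0 : ℝ) (sub_pos.2 (hy₁ i)) (sub_pos.2 (hy₂ i)) ha hb hab
  simp only [Pi.add_apply, Pi.smul_apply, smul_eq_mul] at hpos ⊢
  linarith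

lemma add_smul_mem_strictUpperImage {x : X} (hx : x ∈ s) {d : ι → ℝ} (hd : StrongLT 0 d) {t : ℝ}
    (ht : 0 < t) : f x + t • d ∈ strictUpperImage s f :=
  ⟨x, hx, fun i => lt_add_of_pos_right _ (mul_pos ht (hd i))⟩

lemma exists_dotProduct_pos_of_convex_of_isOpen [Fintype ι] {A : Set (ι → ℝ)} (hconv : Convex ℝ A)
    (hopen : IsOpen A) (h0 : 0 ∉ A) : ∃ w : ι → ℝ, ∀ y ∈ A, 0 < w ⬝ᵥ y := by
  classical
  obtain ⟨φ, hφ⟩ := geometric_hahn_banach_point_open hconv hopen h0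
  refine ⟨(dotProductEquiv ℝ ι).symm φ.toLinearMap, fun y hy => ?_⟩
  have hrep : (dotProductEquiv ℝ ι).symm φ.toLinearMap ⬝ᵥ y = φ y :=
    LinearMap.congr_fun ((dotProductEquiv ℝ ι).apply_symm_apply φ.toLinearMap) y
  simpa only [hrep, map_zero] using hφ y hy

lemma nonneg_and_nonneg_of_forall_pos_nonneg_add_mul {x y : ℝ} (h : ∀ t > 0, 0 ≤ x + t * y) :
    0 ≤ x ∧ 0 ≤ y := by
  constructor
  · have hlim : Tendsto (fun t : ℝ => x + t * y) (𝓝[>] 0) (𝓝 x) := by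
      have hcont : Continuous fun t : ℝ => x + t * y := by fun_prop
      simpa using (hcont.tendsto 0).mono_left nhdsWithin_le_nhds
    exact ge_of_tendsto hlim (eventually_mem_nhdsWithin.mono h)
  · by_contra! hy
    have hlim : Tendsto (fun t : ℝ => x + t * y) atTop atBot :=
      tendsto_const_nhds.add_atBot (tendsto_id.atTop_mul_const_of_neg hy)
    obtain ⟨t, hneg, hpos⟩ := ((hlim.eventually_lt_atBot 0).and (eventually_gt_atTop 0)).exists
    exact hneg.not_ge (h t hpos)

lemma dotProduct_nonneg_of_pos_on_strictUpperImage [Fintype ι] {w : ι → ℝ}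
    (hw : ∀ y ∈ strictUpperImage s f, 0 < w ⬝ᵥ y) {x : X} (hx : x ∈ s) {d : ι → ℝ}
    (hd : StrongLT 0 d) : 0 ≤ w ⬝ᵥ f x ∧ 0 ≤ w ⬝ᵥ d := by
  refine nonneg_and_nonneg_of_forall_pos_nonneg_add_mul fun t ht => ?_
  have hpos := hw _ (add_smul_mem_strictUpperImage hx hd ht)
  simpa only [dotProduct_add, dotProduct_smul, smul_eq_mul] using hpos.le

lemma nonneg_of_forall_strongLT_dotProduct_nonneg [Fintype ι] {w : ι → ℝ}
    (hw : ∀ d, StrongLT 0 d → 0 ≤ w ⬝ᵥ d) : 0 ≤ w := by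
  classical
  intro i
  suffices h : ∀ t > 0, 0 ≤ w i + t * (w ⬝ᵥ 1) from
    (nonneg_and_nonneg_of_forall_pos_nonneg_add_mul h).1
  intro t ht
  have hd : StrongLT 0 (Pi.single i 1 + t • (1 : ι → ℝ)) := fun j =>
    add_pos_of_nonneg_of_pos ((Pi.single_nonneg.2 zero_le_one : (0 : ι → ℝ) ≤ _) j)
      (mul_pos ht one_pos)
  simpa only [dotProduct_add, dotProduct_smul, dotProduct_single_one, smul_eq_mul] using hw _ hd

theorem ConvexLikeOn.exists_nonneg_ne_zero_dotProduct_nonneg [Fintype ι] (hf : ConvexLikeOn s f)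
    (hs : s.Nonempty) (hno : ∀ x ∈ s, ¬ StrongLT (f x) 0) :
    ∃ w : ι → ℝ, 0 ≤ w ∧ w ≠ 0 ∧ ∀ x ∈ s, 0 ≤ w ⬝ᵥ f x := by
  obtain ⟨w, hw⟩ := exists_dotProduct_pos_of_convex_of_isOpen hf.convex_strictUpperImage
    isOpen_strictUpperImage fun ⟨x, hx, hneg⟩ => hno x hx hneg
  obtain ⟨x₀, hx₀⟩ := hs
  have hone : StrongLT (0 : ι → ℝ) 1 := fun _ => one_pos
  refine ⟨w, ?_, ?_, fun x hx => (dotProduct_nonneg_of_pos_on_strictUpperImage hw hx hone).1⟩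
  · exact nonneg_of_forall_strongLT_dotProduct_nonneg fun d hd =>
      (dotProduct_nonneg_of_pos_on_strictUpperImage hw hx₀ hd).2
  · rintro rfl
    simpa only [zero_dotProduct, lt_self_iff_false] using
      hw _ (add_smul_mem_strictUpperImage hx₀ hone one_pos)

end Gordan

section DirectionalDerivative

variable {α : Type*} [MeasurableSpace α] {F : Measure α → ℝ} {η ϑ : Measure α} {L : ℝ}

lemma combo_self (η : Measure α) {t : ℝ} (ht : t ∈ Icc (0 : ℝ) 1) : combo η η t = η := by
  rw [combo, ← add_smul, ← ENNReal.ofReal_add (sub_nonneg.2 ht.2) ht.1, sub_add_cancel,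
    ENNReal.ofReal_one, one_smul]

lemma HasDirDeriv.eq_zero_of_self (h : HasDirDeriv F η η L) : L = 0 := by
  refine tendsto_nhds_unique h (tendsto_const_nhds.congr' ?_)
  filter_upwards [Ioo_mem_nhdsGT one_pos] with t ht
  rw [combo_self η (Ioo_subset_Icc_self ht), sub_self, zero_div]

lemma HasDirDeriv.eventually_lt (h : HasDirDeriv F η ϑ L) {c : ℝ} (hle : F η ≤ c)
    (hlt : F η + L < c) : ∀ᶠ t in 𝓝[>] 0, F (combo η ϑ t) < c := by
  filter_upwards [h.eventually_lt_const (lt_sub_iff_add_lt'.2 hlt), Ioo_mem_nhdsGT one_pos]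
    with t hquot ht
  have hstep : F (combo η ϑ t) - F η < (c - F η) * t := (div_lt_iff₀ ht.1).1 hquot
  have hshrink : (c - F η) * t ≤ c - F η := mul_le_of_le_one_right (sub_nonneg.2 hle) ht.2.le
  linarith

end DirectionalDerivative

section Multipliers

variable {α ι : Type*} [MeasurableSpace α] {C : Set (Measure α)} {P : Measure α → ℝ}
  {G : Measure α → ι → ℝ} {ηs : Measure α} {dP : Measure α → ℝ} {dG : Measure α → ι → ℝ}

/-- Convexity of a set of measures together with a function on it, as in `ConvexOn`, with `combo`
as the convex combination because measures do not form a real vector space. -/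
def ComboConvexOn (C : Set (Measure α)) (F : Measure α → ℝ) : Prop :=
  (∀ η₁ ∈ C, ∀ η₂ ∈ C, ∀ t ∈ Icc (0 : ℝ) 1, combo η₁ η₂ t ∈ C) ∧
    ∀ η₁ ∈ C, ∀ η₂ ∈ C, ∀ t ∈ Icc (0 : ℝ) 1, F (combo η₁ η₂ t) ≤ (1 - t) * F η₁ + t * F η₂

/-- The left-hand sides of the linearized system at a point with constraint values `g`: the
derivative of the objective at index `none`, the first-order expansion of the `i`-th constraint
at index `some i`. -/
def linearization {X : Type*} (g : ι → ℝ) (dP : X → ℝ) (dG : X → ι → ℝ) (x : X) : Option ι → ℝ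
  | none => dP x
  | some i => g i + dG x i

lemma dotProduct_linearization [Fintype ι] {X : Type*} (w : Option ι → ℝ) (g : ι → ℝ)
    (dP : X → ℝ) (dG : X → ι → ℝ) (x : X) :
    w ⬝ᵥ linearization g dP dG x =
      ∑ i, w (some i) * g i + (w none * dP x + ∑ i, w (some i) * dG x i) := by
  simp only [dotProduct, Fintype.sum_option, linearization, mul_add, Finset.sum_add_distrib]
  ring

lemma convexLikeOn_linearization (g : ι → ℝ) (hP : ComboConvexOn C dP)
    (hG : ∀ i, ComboConvexOn C fun η => dG η i) : ConvexLikeOn C (linearization g dP dG) := by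
  intro η₁ h₁ η₂ h₂ a b ha hb hab
  obtain rfl : a = 1 - b := eq_sub_of_add_eq hab
  have hbI : b ∈ Icc (0 : ℝ) 1 := ⟨hb, sub_nonneg.1 ha⟩
  refine ⟨combo η₁ η₂ b, hP.1 η₁ h₁ η₂ h₂ b hbI, fun
    | none => hP.2 η₁ h₁ η₂ h₂ b hbI
    | some i => ?_⟩
  have hGi := (hG i).2 η₁ h₁ η₂ h₂ b hbI
  simp only [linearization, Pi.add_apply, Pi.smul_apply, smul_eq_mul]
  linarith

lemma not_strongLT_linearization_zero [Finite ι] {η : Measure α}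
    (hseg : ∀ t ∈ Icc (0 : ℝ) 1, combo ηs η t ∈ C) (hGs : ∀ i, G ηs i ≤ 0)
    (hopt : ∀ ξ ∈ C, (∀ i, G ξ i ≤ 0) → P ηs ≤ P ξ) (hdP : HasDirDeriv P ηs η (dP η))
    (hdG : ∀ i, HasDirDeriv (fun ξ => G ξ i) ηs η (dG η i)) :
    ¬ StrongLT (linearization (G ηs) dP dG η) 0 := by
  intro hneg
  have hdecrease : ∀ᶠ t in 𝓝[>] 0, P (combo ηs η t) < P ηs :=
    hdP.eventually_lt le_rfl (add_lt_of_neg_right _ (hneg none))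
  have hfeasible : ∀ᶠ t in 𝓝[>] 0, ∀ i, G (combo ηs η t) i < 0 :=
    eventually_all.2 fun i => (hdG i).eventually_lt (hGs i) (hneg (some i))
  obtain ⟨t, ⟨hPt, hGt⟩, ht⟩ :=
    ((hdecrease.and hfeasible).and (Ioo_mem_nhdsGT one_pos)).exists
  exact hPt.not_ge (hopt _ (hseg t (Ioo_subset_Icc_self ht)) fun i => (hGt i).le)

theorem stmt2_general [Fintype ι] (hGs : ∀ i, G ηs i ≤ 0)
    (hopt : ∀ η ∈ C, (∀ i, G η i ≤ 0) → P ηs ≤ P η) (hηsC : ηs ∈ C)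
    (hdP : ∀ η ∈ C, HasDirDeriv P ηs η (dP η))
    (hdG : ∀ η ∈ C, ∀ i, HasDirDeriv (fun ξ => G ξ i) ηs η (dG η i))
    (hP : ComboConvexOn C dP) (hG : ∀ i, ComboConvexOn C fun η => dG η i) :
    ∃ (r : ℝ) (l : ι → ℝ), 0 ≤ r ∧ (∀ i, 0 ≤ l i) ∧ ¬(r = 0 ∧ l = 0) ∧
      (∑ i, l i * G ηs i) = 0 ∧ ∀ η ∈ C, 0 ≤ r * dP η + ∑ i, l i * dG η i := by
  obtain ⟨w, hw_nonneg, hw_ne, hw⟩ :=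
    (convexLikeOn_linearization (G ηs) hP hG).exists_nonneg_ne_zero_dotProduct_nonneg ⟨ηs, hηsC⟩
      fun η hη => not_strongLT_linearization_zero (hP.1 ηs hηsC η hη) hGs hopt (hdP η hη) (hdG η hη)
  simp only [dotProduct_linearization] at hw
  have hslack : ∑ i, w (some i) * G ηs i = 0 := by
    refine le_antisymm (Finset.sum_nonpos fun i _ =>
      mul_nonpos_of_nonneg_of_nonpos (hw_nonneg (some i)) (hGs i)) ?_
    simpa only [(hdP ηs hηsC).eq_zero_of_self, (hdG ηs hηsC _).eq_zero_of_self, mul_zero,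
      Finset.sum_const_zero, add_zero] using hw ηs hηsC
  refine ⟨w none, fun i => w (some i), hw_nonneg none, fun i => hw_nonneg (some i), ?_, hslack,
    fun η hη => by simpa only [hslack, zero_add] using hw η hη⟩
  rintro ⟨hnone, hsome⟩
  exact hw_ne (funext fun
    | none => hnone
    | some i => congrFun hsome i)

end Multipliers

/-- Lagrange-multiplier (KKT-type) conditions for an optimal
reinsurance treaty `η*` minimizing `𝒫` over `𝒮 = {η ∈ 𝓜 : 𝒢(η) ≤ 0}`.
`dP η` and `dG η` denote the directional derivatives `d𝒫(η*; η − η*)` and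
`d𝒢(η*; η − η*)`, assumed to exist and to be convex linear on a convex set
`𝒞 ∋ η*`.  Then there are multipliers `r* ≥ 0`, `λ* ∈ ℝ₊ᵐ`, not both zero, with
`λ*·𝒢(η*) = 0` and `r*·d𝒫(η*; η−η*) + λ*·d𝒢(η*; η−η*) ≥ 0` for all `η ∈ 𝒞`. -/
theorem stmt2 (n m : ℕ) (μ : Measure (Vec n)) [IsProbabilityMeasure μ]
    (P : Measure (Pt n) → ℝ) (G : Measure (Pt n) → Fin m → ℝ)
    (ηs : Measure (Pt n)) (hηs : IsTreaty n μ ηs) (hGs : ∀ i, G ηs i ≤ 0)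
    (hopt : ∀ η, IsTreaty n μ η → (∀ i, G η i ≤ 0) → P ηs ≤ P η)
    (C : Set (Measure (Pt n))) (hCsub : ∀ η ∈ C, IsTreaty n μ η)
    (hηsC : ηs ∈ C)
    (hCconv : ∀ η₁ ∈ C, ∀ η₂ ∈ C, ∀ t ∈ Icc (0:ℝ) 1, combo η₁ η₂ t ∈ C)
    (dP : Measure (Pt n) → ℝ) (dG : Measure (Pt n) → Fin m → ℝ)
    (hdP : ∀ η ∈ C, HasDirDeriv P ηs η (dP η))
    (hdG : ∀ η ∈ C, ∀ i, HasDirDeriv (fun ξ => G ξ i) ηs η (dG η i))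
    (hPlin : ∀ η₁ ∈ C, ∀ η₂ ∈ C, ∀ t ∈ Icc (0:ℝ) 1,
      dP (combo η₁ η₂ t) = (1 - t) * dP η₁ + t * dP η₂)
    (hGlin : ∀ η₁ ∈ C, ∀ η₂ ∈ C, ∀ t ∈ Icc (0:ℝ) 1, ∀ i,
      dG (combo η₁ η₂ t) i = (1 - t) * dG η₁ i + t * dG η₂ i) :
    ∃ (r : ℝ) (l : Fin m → ℝ), 0 ≤ r ∧ (∀ i, 0 ≤ l i) ∧ ¬(r = 0 ∧ l = 0) ∧
      (∑ i, l i * G ηs i) = 0 ∧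
      ∀ η ∈ C, 0 ≤ r * dP η + ∑ i, l i * dG η i :=
  stmt2_general hGs (fun η hη => hopt η (hCsub η hη)) hηsC hdP hdG
    ⟨hCconv, fun η₁ h₁ η₂ h₂ t ht => (hPlin η₁ h₁ η₂ h₂ t ht).le⟩
    fun i => ⟨hCconv, fun η₁ h₁ η₂ h₂ t ht => (hGlin η₁ h₁ η₂ h₂ t ht i).le⟩
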